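/- Let 𝒜 = {S_2, S_3, …} be the collection of closed squares in ℝ² where S_i has side length 1/i for i ≥ 2. Suppose that for every ε > 0 the collection 𝒜 can be packed into a rectangle of area π²/6 − 1 + ε. Then there exists a packing of 𝒜 into a rectangle of area π²/6 − 1 such that the complement, within that rectangle, of the union of the packed squares has Lebesgue measure zero (i.e., 𝒜 tiles a rectangle of area π²/6 − 1). -/

import Mathlib

/-!
The proof is a compactness argument. The square of side `1/2` fits in each of the given
rectangles, so their sides are at least `1/4` (`quarter_le_side`), and since the areas are bounded
the sides are bounded above as well. Hence the sides of the rectangles, the matrices and the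
translation vectors of the packings for `ε = 1/(n+1)` all stay in compact sets, and they converge
along a nonprincipal ultrafilter on `ℕ`, each square having its own limiting rigid motion.

Orthogonality and containment are closed conditions, so they survive in the limit. Disjointness of
the interiors survives too (`isPacking_of_tendsto`): if `x` is interior to two limiting copies, then
the inverse motions carry `x` into the (open) interiors of the original squares, and by continuity
so do the inverse motions of some approximating packing.

The limiting rectangle has area `π²/6 - 1`, which is also the total area of the squares. Copies with
disjoint interiors overlap in null sets, because the frontier of a convex set is null, so their
union has full measure in the rectangle (`volume_diff_eq_zero`).
-/

open Pointwise

noncomputable section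

/-- The rigid motion `(θ, ξ)` acting on a point of `ℝⁿ`: `x ↦ ξ + θx`. -/
def rmApply {n : ℕ} (θ : Matrix (Fin n) (Fin n) ℝ) (ξ : EuclideanSpace ℝ (Fin n))
    (x : EuclideanSpace ℝ (Fin n)) : EuclideanSpace ℝ (Fin n) :=
  ξ + (EuclideanSpace.equiv (Fin n) ℝ).symm (θ.mulVec (EuclideanSpace.equiv (Fin n) ℝ x))

/-- `(θ, ξ)` is a packing of the family `A` into the set `C`: each `θ i` is orthogonal,
each repositioned set `σᵢ(Aᵢ)` is contained in `C`, and the repositioned sets have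
pairwise disjoint interiors. -/
def IsPacking {n : ℕ} {ι : Type*} (A : ι → Set (EuclideanSpace ℝ (Fin n)))
    (θ : ι → Matrix (Fin n) (Fin n) ℝ) (ξ : ι → EuclideanSpace ℝ (Fin n))
    (C : Set (EuclideanSpace ℝ (Fin n))) : Prop :=
  (∀ i, θ i ∈ Matrix.orthogonalGroup (Fin n) ℝ) ∧
  (∀ i, rmApply (θ i) (ξ i) '' A i ⊆ C) ∧
  Pairwise fun i j =>
    interior (rmApply (θ i) (ξ i) '' A i) ∩ interior (rmApply (θ j) (ξ j) '' A j) = ∅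

/-- There exists a packing of `A` into `C`. -/
def PacksInto {n : ℕ} {ι : Type*} (A : ι → Set (EuclideanSpace ℝ (Fin n)))
    (C : Set (EuclideanSpace ℝ (Fin n))) : Prop :=
  ∃ θ ξ, IsPacking A θ ξ C

/-- The closed axis-aligned rectangle `[0, w] × [0, h]` in `ℝ²`. -/
def rect (w h : ℝ) : Set (EuclideanSpace ℝ (Fin 2)) :=
  {x | x 0 ∈ Set.Icc 0 w ∧ x 1 ∈ Set.Icc 0 h}

/-- The collection of squares of side lengths `1/2`, `1/3`, `1/4`, …: the `i`-th set
(for `i : ℕ`) is a closed square of side length `1/(i+2)`. -/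
def reciprocalSquares : ℕ → Set (EuclideanSpace ℝ (Fin 2)) :=
  fun i => rect (1 / ((i : ℝ) + 2)) (1 / ((i : ℝ) + 2))

open Filter Topology MeasureTheory

/-! ### Rigid motions -/

/-- The inverse `x ↦ θᵀ(x - ξ)` of the rigid motion `(θ, ξ)`, for orthogonal `θ`. -/
def rmInv {n : ℕ} (θ : Matrix (Fin n) (Fin n) ℝ) (ξ x : EuclideanSpace ℝ (Fin n)) :
    EuclideanSpace ℝ (Fin n) :=
  (EuclideanSpace.equiv (Fin n) ℝ).symm (θ.transpose.mulVec (EuclideanSpace.equiv (Fin n) ℝ (x - ξ)))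

/-- A rigid motion as a homeomorphism of `ℝⁿ`. -/
def rmHomeo {n : ℕ} (θ : Matrix (Fin n) (Fin n) ℝ) (ξ : EuclideanSpace ℝ (Fin n))
    (hθ : θ ∈ Matrix.orthogonalGroup (Fin n) ℝ) :
    EuclideanSpace ℝ (Fin n) ≃ₜ EuclideanSpace ℝ (Fin n) where
  toFun := rmApply θ ξ
  invFun := rmInv θ ξ
  left_inv x := by
    have h : θ.transpose * θ = 1 := (Matrix.mem_orthogonalGroup_iff' (Fin n) ℝ).1 hθ
    ext k
    change θ.transpose.mulVec (ξ.ofLp + θ.mulVec x.ofLp - ξ.ofLp) k = x.ofLp k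
    rw [add_sub_cancel_left, Matrix.mulVec_mulVec, h, Matrix.one_mulVec]
  right_inv x := by
    have h : θ * θ.transpose = 1 := (Matrix.mem_orthogonalGroup_iff (Fin n) ℝ).1 hθ
    ext k
    change (ξ.ofLp + θ.mulVec (θ.transpose.mulVec (x.ofLp - ξ.ofLp))) k = x.ofLp k
    rw [Matrix.mulVec_mulVec, h, Matrix.one_mulVec, add_sub_cancel]
  continuous_toFun := by
    unfold rmApply
    fun_prop
  continuous_invFun := by
    unfold rmInv
    fun_prop

lemma mem_interior_image_iff {n : ℕ} {θ : Matrix (Fin n) (Fin n) ℝ}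
    (hθ : θ ∈ Matrix.orthogonalGroup (Fin n) ℝ) (ξ x : EuclideanSpace ℝ (Fin n))
    (A : Set (EuclideanSpace ℝ (Fin n))) :
    x ∈ interior (rmApply θ ξ '' A) ↔ rmInv θ ξ x ∈ interior A := by
  have h1 : rmApply θ ξ '' A = rmHomeo θ ξ hθ '' A := rfl
  rw [h1, ← Homeomorph.image_interior, Homeomorph.image_eq_preimage_symm]
  rfl

lemma rmApply_image_eq {n : ℕ} (θ : Matrix (Fin n) (Fin n) ℝ) (ξ : EuclideanSpace ℝ (Fin n))
    (A : Set (EuclideanSpace ℝ (Fin n))) :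
    rmApply θ ξ '' A = (fun y => ξ + y) '' (Matrix.toEuclideanLin θ '' A) := by
  rw [Set.image_image]
  rfl

lemma volume_rmApply_image {n : ℕ} {θ : Matrix (Fin n) (Fin n) ℝ}
    (hθ : θ ∈ Matrix.orthogonalGroup (Fin n) ℝ) (ξ : EuclideanSpace ℝ (Fin n))
    (A : Set (EuclideanSpace ℝ (Fin n))) :
    volume (rmApply θ ξ '' A) = volume A := by
  have hdet : |θ.det| = 1 := by
    have h : θ.det * θ.det = 1 := (Matrix.det_of_mem_unitary hθ).1
    rcases mul_self_eq_one_iff.1 h with h | h <;> simp [h]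
  rw [rmApply_image_eq, Set.image_add_left, measure_preimage_add, Measure.addHaar_image_linearMap,
    LinearMap.det_toLpLin, hdet]
  simp

lemma convex_rmApply_image {n : ℕ} (θ : Matrix (Fin n) (Fin n) ℝ)
    (ξ : EuclideanSpace ℝ (Fin n)) {A : Set (EuclideanSpace ℝ (Fin n))} (hA : Convex ℝ A) :
    Convex ℝ (rmApply θ ξ '' A) := by
  rw [rmApply_image_eq]
  exact (hA.linear_image _).translate ξ

lemma isClosed_rmApply_image {n : ℕ} {θ : Matrix (Fin n) (Fin n) ℝ}
    (hθ : θ ∈ Matrix.orthogonalGroup (Fin n) ℝ) (ξ : EuclideanSpace ℝ (Fin n))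
    {A : Set (EuclideanSpace ℝ (Fin n))} (hA : IsClosed A) :
    IsClosed (rmApply θ ξ '' A) :=
  (rmHomeo θ ξ hθ).isClosed_image.2 hA

/-! ### Rectangles -/

lemma rect_eq_preimage (w h : ℝ) :
    rect w h = (@WithLp.ofLp 2 (Fin 2 → ℝ)) ⁻¹' Set.Icc 0 ![w, h] := by
  ext x
  simp [rect, Pi.le_def, Fin.forall_fin_two]
  tauto

lemma isClosed_rect (w h : ℝ) : IsClosed (rect w h) := by
  rw [rect_eq_preimage]
  exact isClosed_Icc.preimage (PiLp.continuous_ofLp 2 _)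

lemma convex_rect (w h : ℝ) : Convex ℝ (rect w h) := by
  rw [rect_eq_preimage]
  exact (convex_Icc _ _).linear_preimage (WithLp.linearEquiv 2 ℝ (Fin 2 → ℝ)).toLinearMap

lemma volume_rect {w h : ℝ} (hw : 0 ≤ w) :
    volume (rect w h) = ENNReal.ofReal (w * h) := by
  rw [rect_eq_preimage, (PiLp.volume_preserving_ofLp (Fin 2)).measure_preimage
    measurableSet_Icc.nullMeasurableSet, Real.volume_Icc_pi]
  simp [ENNReal.ofReal_mul hw]

lemma zero_mem_reciprocalSquares (i : ℕ) : 0 ∈ reciprocalSquares i := by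
  have : (0 : ℝ) ≤ (i : ℝ) + 2 := by positivity
  simp [reciprocalSquares, rect, this]

/-- If a copy of the square of side `1/2` lies in a strip of width `w` orthogonal to the `k`-th
axis, then `w ≥ 1/4`: one of the two edge directions has a `k`-th component of absolute value at
least `1/2`. -/
lemma quarter_le_side {θ : Matrix (Fin 2) (Fin 2) ℝ} {ξ : EuclideanSpace ℝ (Fin 2)}
    (hθ : θ ∈ Matrix.orthogonalGroup (Fin 2) ℝ) (k : Fin 2) {w : ℝ}
    (h : ∀ x ∈ reciprocalSquares 0, rmApply θ ξ x k ∈ Set.Icc 0 w) : 1 / 4 ≤ w := by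
  have h0 := h 0 (zero_mem_reciprocalSquares 0)
  have h1 := h !₂[1 / 2, 0] (by simp [reciprocalSquares, rect])
  have h2 := h !₂[0, 1 / 2] (by simp [reciprocalSquares, rect])
  have hrow : θ k 0 ^ 2 + θ k 1 ^ 2 = 1 := by
    have hm := (Matrix.mem_orthogonalGroup_iff (Fin 2) ℝ).1 hθ
    have := congrFun (congrFun hm k) k
    simpa [Matrix.mul_apply, Fin.sum_univ_two, Matrix.star_apply, sq] using this
  have happly : ∀ x, rmApply θ ξ x k = ξ k + (θ k 0 * x 0 + θ k 1 * x 1) := by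
    intro x
    change ξ k + θ.mulVec x.ofLp k = _
    rw [Matrix.mulVec, dotProduct, Fin.sum_univ_two]
  simp [happly] at h0 h1 h2
  by_contra! hw
  have ha : |θ k 0| ≤ 1 / 2 := abs_le.2 ⟨by linarith, by linarith⟩
  have hb : |θ k 1| ≤ 1 / 2 := abs_le.2 ⟨by linarith, by linarith⟩
  have := sq_le_sq' (abs_le.1 ha).1 (abs_le.1 ha).2
  have := sq_le_sq' (abs_le.1 hb).1 (abs_le.1 hb).2
  linarith

/-! ### Limits of packings -/

lemma tendsto_rmApply {α : Type*} {l : Filter α} {n : ℕ} {T : α → Matrix (Fin n) (Fin n) ℝ}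
    {X : α → EuclideanSpace ℝ (Fin n)} {θ : Matrix (Fin n) (Fin n) ℝ}
    {ξ : EuclideanSpace ℝ (Fin n)} (hT : Tendsto T l (𝓝 θ)) (hX : Tendsto X l (𝓝 ξ))
    (x : EuclideanSpace ℝ (Fin n)) :
    Tendsto (fun a => rmApply (T a) (X a) x) l (𝓝 (rmApply θ ξ x)) := by
  have hc : Continuous fun p : Matrix (Fin n) (Fin n) ℝ × EuclideanSpace ℝ (Fin n) =>
      rmApply p.1 p.2 x := by
    unfold rmApply
    fun_prop
  exact Tendsto.comp (f := fun a => (T a, X a))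
    (g := fun p : Matrix (Fin n) (Fin n) ℝ × EuclideanSpace ℝ (Fin n) => rmApply p.1 p.2 x)
    (hc.tendsto (θ, ξ)) (hT.prodMk_nhds hX)

lemma tendsto_rmInv {α : Type*} {l : Filter α} {n : ℕ} {T : α → Matrix (Fin n) (Fin n) ℝ}
    {X : α → EuclideanSpace ℝ (Fin n)} {θ : Matrix (Fin n) (Fin n) ℝ}
    {ξ : EuclideanSpace ℝ (Fin n)} (hT : Tendsto T l (𝓝 θ)) (hX : Tendsto X l (𝓝 ξ))
    (x : EuclideanSpace ℝ (Fin n)) :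
    Tendsto (fun a => rmInv (T a) (X a) x) l (𝓝 (rmInv θ ξ x)) := by
  have hc : Continuous fun p : Matrix (Fin n) (Fin n) ℝ × EuclideanSpace ℝ (Fin n) =>
      rmInv p.1 p.2 x := by
    unfold rmInv
    fun_prop
  exact Tendsto.comp (f := fun a => (T a, X a))
    (g := fun p : Matrix (Fin n) (Fin n) ℝ × EuclideanSpace ℝ (Fin n) => rmInv p.1 p.2 x)
    (hc.tendsto (θ, ξ)) (hT.prodMk_nhds hX)

/-- Packings into rectangles are closed under termwise limits of all the data. -/
lemma isPacking_of_tendsto {α ι : Type*} {l : Filter α} [l.NeBot]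
    {A : ι → Set (EuclideanSpace ℝ (Fin 2))}
    {T : α → ι → Matrix (Fin 2) (Fin 2) ℝ} {X : α → ι → EuclideanSpace ℝ (Fin 2)} {W H : α → ℝ}
    {θ : ι → Matrix (Fin 2) (Fin 2) ℝ} {ξ : ι → EuclideanSpace ℝ (Fin 2)} {w h : ℝ}
    (hP : ∀ a, IsPacking A (T a) (X a) (rect (W a) (H a)))
    (hT : ∀ i, Tendsto (fun a => T a i) l (𝓝 (θ i)))
    (hX : ∀ i, Tendsto (fun a => X a i) l (𝓝 (ξ i)))
    (hW : Tendsto W l (𝓝 w)) (hH : Tendsto H l (𝓝 h)) :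
    IsPacking A θ ξ (rect w h) := by
  have hθ : ∀ i, θ i ∈ Matrix.orthogonalGroup (Fin 2) ℝ := by
    intro i
    rw [Matrix.mem_orthogonalGroup_iff]
    have h1 : Tendsto (fun a => T a i * (T a i).transpose) l (𝓝 (θ i * (θ i).transpose)) := by
      have hc : Continuous fun M : Matrix (Fin 2) (Fin 2) ℝ => M * M.transpose := by fun_prop
      exact (hc.tendsto _).comp (hT i)
    refine tendsto_nhds_unique h1 (tendsto_const_nhds.congr fun a => ?_)
    exact ((Matrix.mem_orthogonalGroup_iff (Fin 2) ℝ).1 ((hP a).1 i)).symm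
  refine ⟨hθ, ?_, ?_⟩
  · rintro i _ ⟨x, hx, rfl⟩
    have hlim := tendsto_rmApply (hT i) (hX i) x
    have hk : ∀ k : Fin 2, Tendsto (fun a => rmApply (T a i) (X a i) x k) l
        (𝓝 (rmApply (θ i) (ξ i) x k)) := fun k =>
      ((EuclideanSpace.proj (𝕜 := ℝ) k).continuous.tendsto _).comp hlim
    have hmem : ∀ a, rmApply (T a i) (X a i) x ∈ rect (W a) (H a) := fun a =>
      (hP a).2.1 i ⟨x, hx, rfl⟩
    exact ⟨⟨ge_of_tendsto' (hk 0) fun a => (hmem a).1.1,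
        le_of_tendsto_of_tendsto' (hk 0) hW fun a => (hmem a).1.2⟩,
      ⟨ge_of_tendsto' (hk 1) fun a => (hmem a).2.1,
        le_of_tendsto_of_tendsto' (hk 1) hH fun a => (hmem a).2.2⟩⟩
  · intro i j hij
    refine Set.eq_empty_iff_forall_notMem.2 ?_
    rintro x ⟨hi, hj⟩
    rw [mem_interior_image_iff (hθ i)] at hi
    rw [mem_interior_image_iff (hθ j)] at hj
    -- Some approximating packing already has `x` interior to both copies.
    obtain ⟨a, hai, haj⟩ :=
      (((tendsto_rmInv (hT i) (hX i) x).eventually_mem (isOpen_interior.mem_nhds hi)).and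
      ((tendsto_rmInv (hT j) (hX j) x).eventually_mem (isOpen_interior.mem_nhds hj))).exists
    have hx : x ∈ interior (rmApply (T a i) (X a i) '' A i) ∩
        interior (rmApply (T a j) (X a j) '' A j) :=
      ⟨(mem_interior_image_iff ((hP a).1 i) _ _ _).2 hai,
        (mem_interior_image_iff ((hP a).1 j) _ _ _).2 haj⟩
    rw [(hP a).2.2 hij] at hx
    exact hx

lemma exists_tendsto_of_mem {α E : Type*} [TopologicalSpace E] (U : Ultrafilter α) {K : Set E}
    (hK : IsCompact K) {f : α → E} (hf : ∀ a, f a ∈ K) :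
    ∃ x ∈ K, Tendsto f U (𝓝 x) :=
  hK.ultrafilter_le_nhds' (U.map f) (Ultrafilter.mem_map.2 (univ_mem' hf))

/-! ### Area -/

lemma aedisjoint_of_interior {A B : Set (EuclideanSpace ℝ (Fin 2))} (hA : Convex ℝ A)
    (hB : Convex ℝ B) (h : interior A ∩ interior B = ∅) : AEDisjoint volume A B := by
  refine measure_mono_null (t := frontier A ∪ frontier B) ?_
    (measure_union_null (hA.addHaar_frontier volume) (hB.addHaar_frontier volume))
  rintro x ⟨ha, hb⟩
  by_contra hx
  simp only [Set.mem_union, not_or] at hx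
  have hxi : x ∈ interior A ∩ interior B := by
    constructor
    · by_contra hn
      exact hx.1 ⟨subset_closure ha, hn⟩
    · by_contra hn
      exact hx.2 ⟨subset_closure hb, hn⟩
  rw [h] at hxi
  exact hxi

lemma hasSum_area :
    HasSum (fun i : ℕ => 1 / ((i : ℝ) + 2) * (1 / ((i : ℝ) + 2))) (Real.pi ^ 2 / 6 - 1) := by
  have h := (hasSum_nat_add_iff' 2).2 hasSum_zeta_two
  simp only [Finset.sum_range_succ, Finset.sum_range_zero] at h
  have hf : (fun i : ℕ => 1 / ((i : ℝ) + 2) * (1 / ((i : ℝ) + 2))) =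
      fun n : ℕ => 1 / ((n + 2 : ℕ) : ℝ) ^ 2 := by
    funext i
    rw [div_mul_div_comm, one_mul, ← sq, Nat.cast_add, Nat.cast_ofNat]
  have hc : Real.pi ^ 2 / 6 - 1 =
      Real.pi ^ 2 / 6 - (0 + 1 / ((0 : ℕ) : ℝ) ^ 2 + 1 / ((1 : ℕ) : ℝ) ^ 2) := by
    simp
  rw [hf, hc]
  exact h

lemma tsum_volume_reciprocalSquares :
    ∑' i, volume (reciprocalSquares i) = ENNReal.ofReal (Real.pi ^ 2 / 6 - 1) := by
  rw [← hasSum_area.tsum_eq,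
    ENNReal.ofReal_tsum_of_nonneg (fun i => by positivity) hasSum_area.summable]
  refine tsum_congr fun i => ?_
  rw [reciprocalSquares, volume_rect (by positivity)]

lemma volume_diff_eq_zero {w h : ℝ} (hw : 0 ≤ w) (hwh : w * h = Real.pi ^ 2 / 6 - 1)
    {θ : ℕ → Matrix (Fin 2) (Fin 2) ℝ} {ξ : ℕ → EuclideanSpace ℝ (Fin 2)}
    (hP : IsPacking reciprocalSquares θ ξ (rect w h)) :
    volume (rect w h \ ⋃ i, rmApply (θ i) (ξ i) '' reciprocalSquares i) = 0 := by
  have hmeas : ∀ i, MeasurableSet (rmApply (θ i) (ξ i) '' reciprocalSquares i) := fun i =>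
    (isClosed_rmApply_image (hP.1 i) _ (isClosed_rect _ _)).measurableSet
  have hconv : ∀ i, Convex ℝ (rmApply (θ i) (ξ i) '' reciprocalSquares i) := fun i =>
    convex_rmApply_image _ _ (convex_rect _ _)
  have hdisj : Pairwise (Function.onFun (AEDisjoint volume)
      fun i => rmApply (θ i) (ξ i) '' reciprocalSquares i) := fun i j hij =>
    aedisjoint_of_interior (hconv i) (hconv j) (hP.2.2 hij)
  have hU : volume (⋃ i, rmApply (θ i) (ξ i) '' reciprocalSquares i) =
      ENNReal.ofReal (Real.pi ^ 2 / 6 - 1) := by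
    rw [measure_iUnion₀ hdisj fun i => (hmeas i).nullMeasurableSet, ← tsum_volume_reciprocalSquares]
    exact tsum_congr fun i => volume_rmApply_image (hP.1 i) _ _
  rw [measure_sdiff (Set.iUnion_subset hP.2.1) (MeasurableSet.iUnion hmeas).nullMeasurableSet
    (by rw [hU]; exact ENNReal.ofReal_ne_top), hU, volume_rect hw, hwh, tsub_self]

/-- **Corollary 2 (first part).** If for every `ε > 0` the squares of side lengths `1/2`,
`1/3`, `1/4`, … can be packed into a rectangle of area `π²/6 - 1 + ε`, then they tile a
rectangle of area `π²/6 - 1`: there is a packing into some rectangle of that area whose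
complement in the rectangle has Lebesgue measure zero. -/
theorem reciprocal_squares_tile_rectangle
    (h : ∀ ε : ℝ, 0 < ε → ∃ w h' : ℝ, 0 ≤ w ∧ 0 ≤ h' ∧
      w * h' = Real.pi ^ 2 / 6 - 1 + ε ∧ PacksInto reciprocalSquares (rect w h')) :
    ∃ w h' : ℝ, 0 ≤ w ∧ 0 ≤ h' ∧ w * h' = Real.pi ^ 2 / 6 - 1 ∧
      ∃ (θ : ℕ → Matrix (Fin 2) (Fin 2) ℝ) (ξ : ℕ → EuclideanSpace ℝ (Fin 2)),
        IsPacking reciprocalSquares θ ξ (rect w h') ∧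
        MeasureTheory.volume
          (rect w h' \ ⋃ i, rmApply (θ i) (ξ i) '' reciprocalSquares i) = 0 := by
  have hε : ∀ n : ℕ, (0 : ℝ) < 1 / ((n : ℝ) + 1) := fun n => by positivity
  choose W H hW0 hH0 hWH hpack using fun n : ℕ => h (1 / ((n : ℝ) + 1)) (hε n)
  choose T X hP using hpack
  have hmem : ∀ n i, ∀ x ∈ reciprocalSquares i, rmApply (T n i) (X n i) x ∈ rect (W n) (H n) :=
    fun n i x hx => (hP n).2.1 i ⟨x, hx, rfl⟩
  have hW1 : ∀ n, 1 / 4 ≤ W n := fun n =>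
    quarter_le_side ((hP n).1 0) 0 fun x hx => (hmem n 0 x hx).1
  have hH1 : ∀ n, 1 / 4 ≤ H n := fun n =>
    quarter_le_side ((hP n).1 0) 1 fun x hx => (hmem n 0 x hx).2
  -- The area is at most `4² / 6 - 1 + 1 < 4`, so a side of length at least `1/4` forces the other
  -- one to be at most `16`.
  have harea : ∀ n, W n * H n ≤ 4 := by
    intro n
    have h1 : 1 / ((n : ℝ) + 1) ≤ 1 := by
      rw [div_le_one (by positivity)]
      linarith [n.cast_nonneg (α := ℝ)]
    rw [hWH]
    nlinarith [Real.pi_pos, Real.pi_le_four]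
  have hWK : ∀ n, W n ∈ Set.Icc (0 : ℝ) 16 := fun n =>
    ⟨hW0 n, by nlinarith [hW0 n, hH1 n, harea n]⟩
  have hHK : ∀ n, H n ∈ Set.Icc (0 : ℝ) 16 := fun n =>
    ⟨hH0 n, by nlinarith [hH0 n, hW1 n, harea n]⟩
  -- `X n i` is the image of the origin, a vertex of the `i`-th square.
  have hXK : ∀ i n, X n i ∈ Metric.closedBall (0 : EuclideanSpace ℝ (Fin 2)) 32 := by
    intro i n
    have h1 := hmem n i 0 (zero_mem_reciprocalSquares i)
    simp [rmApply, rect] at h1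
    obtain ⟨⟨ha, hb⟩, hc, hd⟩ := h1
    rw [mem_closedBall_zero_iff, EuclideanSpace.norm_eq, Real.sqrt_le_left (by norm_num)]
    simp only [Fin.sum_univ_two, Real.norm_eq_abs, sq_abs]
    nlinarith [(hWK n).2, (hHK n).2]
  have hTK : ∀ i n, T n i ∈ Set.pi (Set.univ : Set (Fin 2)) fun _ =>
      Set.pi (Set.univ : Set (Fin 2)) fun _ => Set.Icc (-1 : ℝ) 1 := by
    intro i n a _ b _
    exact abs_le.1 (entry_norm_bound_of_unitary ((hP n).1 i) a b)
  let U : Ultrafilter ℕ := hyperfilter ℕ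
  have hU : (U : Filter ℕ) ≤ atTop := Nat.hyperfilter_le_atTop
  obtain ⟨w, hw, hWlim⟩ := exists_tendsto_of_mem U isCompact_Icc hWK
  obtain ⟨h', hh', hHlim⟩ := exists_tendsto_of_mem U isCompact_Icc hHK
  choose ξ _ hXlim using fun i =>
    exists_tendsto_of_mem U (isCompact_closedBall (0 : EuclideanSpace ℝ (Fin 2)) 32) (hXK i)
  choose θ _ hTlim using fun i => exists_tendsto_of_mem (E := Matrix (Fin 2) (Fin 2) ℝ) U
    (isCompact_univ_pi fun _ => isCompact_univ_pi fun _ => isCompact_Icc) (hTK i)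
  have hlim : w * h' = Real.pi ^ 2 / 6 - 1 := by
    refine tendsto_nhds_unique (hWlim.mul hHlim) ?_
    simp only [hWH]
    simpa using (tendsto_one_div_add_atTop_nhds_zero_nat (𝕜 := ℝ)).mono_left hU |>.const_add
      (Real.pi ^ 2 / 6 - 1)
  have hpk := isPacking_of_tendsto hP hTlim hXlim hWlim hHlim
  exact ⟨w, h', hw.1, hh'.1, hlim, θ, ξ, hpk, volume_diff_eq_zero hw.1 hlim hpk⟩
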